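/- Let β ≥ 1 and 0 < α < 1/3. Then the system dθ/dt = F₁(θ,W), dW/dt = F₂(θ,W) on Ω_β has exactly two equilibrium points (θ_*, 0) and (θ_**, 0) with 0 < θ_* < θ_β and θ_β < θ_** < π/2, and for arbitrary initial data (θ₀, W₀) ∈ Ω_β the following are equivalent: (i) the solution with initial data (θ₀, W₀) is a leapfrogging solution, i.e., its orbit is a closed curve revolving around the point (θ_β, 0); (ii) θ₀ ∈ (θ_*, θ_**) and H(θ₀, W₀) < min{H(θ_*, 0), H(θ_**, 0)}. -/

import Mathlib

noncomputable section

open Real Set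

/-- θ_β = arctan(1/√β). -/
def thetaB (β : ℝ) : ℝ := Real.arctan (1 / Real.sqrt β)

/-- The phase space Ω_β. -/
def OmegaB (β : ℝ) : Set (ℝ × ℝ) :=
  {p | 0 < p.1 ∧ p.1 < Real.pi / 2 ∧ p ≠ (thetaB β, 0)}

/-- D(θ,W) = (d²/β)(√β sin θ − cos θ)² + W². -/
def Dfun (d β θ W : ℝ) : ℝ :=
  d ^ 2 / β * (Real.sqrt β * Real.sin θ - Real.cos θ) ^ 2 + W ^ 2

/-- F₁(θ,W) = α √β W / D(θ,W)^{3/2}. -/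
def F1 (α d β θ W : ℝ) : ℝ :=
  α * Real.sqrt β * W / Dfun d β θ W ^ ((3 : ℝ) / 2)

/-- F₂(θ,W). -/
def F2 (α d β θ W : ℝ) : ℝ :=
  (β ^ ((3 : ℝ) / 2) * Real.sin θ - Real.cos θ) / (d * Real.sin θ * Real.cos θ) -
    α * d ^ 2 * (Real.sin θ + Real.sqrt β * Real.cos θ) *
        (Real.sqrt β * Real.sin θ - Real.cos θ) /
      (Real.sqrt β * Dfun d β θ W ^ ((3 : ℝ) / 2))

/-- The Hamiltonian H(θ,W). -/
def Ham (α d β θ W : ℝ) : ℝ :=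
  1 / (2 * d) *
      Real.log (((1 - Real.sin θ) ^ (β ^ ((3 : ℝ) / 2)) * (1 - Real.cos θ)) /
        ((1 + Real.sin θ) ^ (β ^ ((3 : ℝ) / 2)) * (1 + Real.cos θ))) -
    α * Real.sqrt β / Dfun d β θ W ^ ((1 : ℝ) / 2)

/-- A time-global solution of the system (3.4), staying in the phase space Ω_β. -/
def IsSolution (α d β : ℝ) (θ W : ℝ → ℝ) : Prop :=
  (∀ t : ℝ, (θ t, W t) ∈ OmegaB β) ∧
  (∀ t : ℝ, HasDerivAt θ (F1 α d β (θ t) (W t)) t) ∧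
  (∀ t : ℝ, HasDerivAt W (F2 α d β (θ t) (W t)) t)

/-- A leapfrogging solution: a non-constant periodic solution whose (closed) orbit
revolves around the point (θ_β, 0); in particular it meets both line segments
(0, θ_β) × {0} and (θ_β, π/2) × {0}. -/
def IsLeapfrog (β : ℝ) (θ W : ℝ → ℝ) : Prop :=
  (∃ T : ℝ, 0 < T ∧ ∀ t : ℝ, θ (t + T) = θ t ∧ W (t + T) = W t) ∧
  (∃ t s : ℝ, (θ t, W t) ≠ (θ s, W s)) ∧
  (∃ t₁ : ℝ, θ t₁ ∈ Set.Ioo 0 (thetaB β) ∧ W t₁ = 0) ∧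
  (∃ t₂ : ℝ, θ t₂ ∈ Set.Ioo (thetaB β) (Real.pi / 2) ∧ W t₂ = 0)

/-- The one-variable part of the Hamiltonian. -/
def Gf (d β θ : ℝ) : ℝ :=
  1 / (2 * d) * (Real.sqrt β ^ 3 * (Real.log (1 - Real.sin θ) - Real.log (1 + Real.sin θ)) +
    (Real.log (1 - Real.cos θ) - Real.log (1 + Real.cos θ)))

lemma rpow_three_half (x : ℝ) (hx : 0 ≤ x) : x ^ ((3 : ℝ) / 2) = Real.sqrt x ^ 3 := by
  rw [Real.sqrt_eq_rpow, ← Real.rpow_natCast, ← Real.rpow_mul hx]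
  norm_num

lemma Dfun_nonneg (d β θ W : ℝ) (hβ : 1 ≤ β) : 0 ≤ Dfun d β θ W := by
  unfold Dfun
  positivity

lemma trig_facts {θ : ℝ} (h0 : 0 < θ) (h1 : θ < Real.pi / 2) :
    0 < Real.sin θ ∧ 0 < Real.cos θ ∧ Real.sin θ < 1 ∧ Real.cos θ < 1 := by
  have hs : 0 < Real.sin θ := Real.sin_pos_of_pos_of_lt_pi h0 (by linarith)
  have hc : 0 < Real.cos θ := Real.cos_pos_of_mem_Ioo ⟨by linarith, h1⟩
  have := Real.sin_sq_add_cos_sq θ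
  refine ⟨hs, hc, by nlinarith, by nlinarith⟩

lemma thetaB_mem (β : ℝ) (hβ : 1 ≤ β) : 0 < thetaB β ∧ thetaB β < Real.pi / 2 := by
  unfold thetaB
  exact ⟨Real.arctan_pos.2 (by positivity), Real.arctan_lt_pi_div_two _⟩

lemma thetaB_eq (β : ℝ) (hβ : 1 ≤ β) :
    Real.sqrt β * Real.sin (thetaB β) - Real.cos (thetaB β) = 0 := by
  have hb : 0 < Real.sqrt β := Real.sqrt_pos.2 (by linarith)
  obtain ⟨h0, h1⟩ := thetaB_mem β hβ
  obtain ⟨hs, hc, -, -⟩ := trig_facts h0 h1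
  have h : Real.tan (thetaB β) = 1 / Real.sqrt β := by
    unfold thetaB
    exact Real.tan_arctan _
  rw [Real.tan_eq_sin_div_cos] at h
  field_simp at h
  linarith

lemma q_strictMono (β : ℝ) (hβ : 1 ≤ β) :
    StrictMonoOn (fun θ => Real.sqrt β * Real.sin θ - Real.cos θ) (Icc 0 (Real.pi / 2)) := by
  have hb : 0 < Real.sqrt β := Real.sqrt_pos.2 (by linarith)
  intro x hx y hy hxy
  have h1 : Real.sin x < Real.sin y :=
    Real.strictMonoOn_sin ⟨by linarith [hx.1, Real.pi_pos], hx.2⟩ ⟨by linarith [hy.1, Real.pi_pos], hy.2⟩ hxy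
  have h2 : Real.cos y < Real.cos x :=
    Real.strictAntiOn_cos ⟨hx.1, by linarith [hx.2, Real.pi_pos]⟩ ⟨hy.1, by linarith [hy.2, Real.pi_pos]⟩ hxy
  have := mul_lt_mul_of_pos_left h1 hb
  simp only
  linarith

lemma q_pos (β θ : ℝ) (hβ : 1 ≤ β) (h0 : thetaB β < θ) (h1 : θ ≤ Real.pi / 2) :
    0 < Real.sqrt β * Real.sin θ - Real.cos θ := by
  have h := thetaB_mem β hβ
  have := q_strictMono β hβ ⟨h.1.le, h.2.le⟩ ⟨by linarith, h1⟩ h0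
  simp only [thetaB_eq β hβ] at this
  exact this

lemma q_neg (β θ : ℝ) (hβ : 1 ≤ β) (h0 : θ < thetaB β) (h1 : 0 ≤ θ) :
    Real.sqrt β * Real.sin θ - Real.cos θ < 0 := by
  have h := thetaB_mem β hβ
  have := q_strictMono β hβ ⟨h1, by linarith⟩ ⟨h.1.le, h.2.le⟩ h0
  simp only [thetaB_eq β hβ] at this
  exact this

lemma q_ne (β θ : ℝ) (hβ : 1 ≤ β) (h0 : 0 < θ) (h1 : θ < Real.pi / 2) (h : θ ≠ thetaB β) :
    Real.sqrt β * Real.sin θ - Real.cos θ ≠ 0 := by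
  rcases lt_or_gt_of_ne h with h | h
  · exact (q_neg β θ hβ h h0.le).ne
  · exact (q_pos β θ hβ h h1.le).ne'

lemma Dfun_pos (d β θ W : ℝ) (hd : 0 < d) (hβ : 1 ≤ β) (h : (θ, W) ∈ OmegaB β) :
    0 < Dfun d β θ W := by
  obtain ⟨h0, h1, h2⟩ := h
  unfold Dfun
  by_cases hW : W = 0
  · have : θ ≠ thetaB β := by
      rintro rfl
      exact h2 (by rw [hW])
    have := q_ne β θ hβ h0 h1 this
    positivity
  · positivity

lemma Ham_eq (α d β θ W : ℝ) (hβ : 1 ≤ β) (h0 : 0 < θ) (h1 : θ < Real.pi / 2) :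
    Ham α d β θ W = Gf d β θ - α * Real.sqrt β / Real.sqrt (Dfun d β θ W) := by
  obtain ⟨hs, hc, hs1, hc1⟩ := trig_facts h0 h1
  unfold Ham Gf
  rw [← Real.sqrt_eq_rpow, rpow_three_half β (by linarith)]
  have e1 : (0 : ℝ) < 1 - Real.sin θ := by linarith
  have e2 : (0 : ℝ) < 1 - Real.cos θ := by linarith
  have e3 : (0 : ℝ) < 1 + Real.sin θ := by linarith
  have e4 : (0 : ℝ) < 1 + Real.cos θ := by linarith
  have f1 := Real.rpow_pos_of_pos e1 (Real.sqrt β ^ 3)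
  have f3 := Real.rpow_pos_of_pos e3 (Real.sqrt β ^ 3)
  rw [Real.log_div (by positivity) (by positivity), Real.log_mul (by positivity) (by positivity),
    Real.log_mul (by positivity) (by positivity), Real.log_rpow e1, Real.log_rpow e3]
  ring

lemma hasDerivAt_Gf (d β θ : ℝ) (hd : 0 < d) (h0 : 0 < θ) (h1 : θ < Real.pi / 2) :
    HasDerivAt (Gf d β) ((1 / Real.sin θ - Real.sqrt β ^ 3 / Real.cos θ) / d) θ := by
  obtain ⟨hs, hc, hs1, hc1⟩ := trig_facts h0 h1
  have e1 : 1 - Real.sin θ ≠ 0 := by linarith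
  have e2 : 1 - Real.cos θ ≠ 0 := by linarith
  have e3 : 1 + Real.sin θ ≠ 0 := by linarith
  have e4 : 1 + Real.cos θ ≠ 0 := by linarith
  have hS := Real.hasDerivAt_sin θ
  have hC := Real.hasDerivAt_cos θ
  have := ((((((hS.const_sub 1).log e1).sub ((hS.const_add 1).log e3)).const_mul (Real.sqrt β ^ 3)).add
    (((hC.const_sub 1).log e2).sub ((hC.const_add 1).log e4)))).const_mul (1 / (2 * d))
  refine this.congr_deriv ?_
  have k1 : -Real.cos θ / (1 - Real.sin θ) - Real.cos θ / (1 + Real.sin θ) = -2 / Real.cos θ := by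
    field_simp
    nlinarith [Real.sin_sq_add_cos_sq θ]
  have k2 : - -Real.sin θ / (1 - Real.cos θ) - -Real.sin θ / (1 + Real.cos θ) = 2 / Real.sin θ := by
    field_simp
    nlinarith [Real.sin_sq_add_cos_sq θ]
  rw [k1, k2]
  field_simp
  ring

lemma F1_eq (α d β θ W : ℝ) (hβ : 1 ≤ β) :
    F1 α d β θ W = α * Real.sqrt β * W / Real.sqrt (Dfun d β θ W) ^ 3 := by
  unfold F1
  rw [rpow_three_half _ (Dfun_nonneg d β θ W hβ)]

lemma F2_eq (α d β θ W : ℝ) (hβ : 1 ≤ β) (hd : 0 < d) (h0 : 0 < θ) (h1 : θ < Real.pi / 2) :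
    F2 α d β θ W = -((1 / Real.sin θ - Real.sqrt β ^ 3 / Real.cos θ) / d) -
      α * d ^ 2 * (Real.sin θ + Real.sqrt β * Real.cos θ) *
        (Real.sqrt β * Real.sin θ - Real.cos θ) /
      (Real.sqrt β * Real.sqrt (Dfun d β θ W) ^ 3) := by
  obtain ⟨hs, hc, hs1, hc1⟩ := trig_facts h0 h1
  unfold F2
  rw [rpow_three_half _ (Dfun_nonneg d β θ W hβ), rpow_three_half β (by linarith)]
  congr 1
  field_simp
  ring

lemma hasDerivAt_Ham (α d β : ℝ) (hβ : 1 ≤ β) (hd : 0 < d) (θ W : ℝ → ℝ) (θ' W' t : ℝ)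
    (hθ : HasDerivAt θ θ' t) (hW : HasDerivAt W W' t) (hm : (θ t, W t) ∈ OmegaB β) :
    HasDerivAt (fun s => Ham α d β (θ s) (W s))
      (-F2 α d β (θ t) (W t) * θ' + F1 α d β (θ t) (W t) * W') t := by
  have hb : 0 < Real.sqrt β := Real.sqrt_pos.2 (by linarith)
  have hbb : Real.sqrt β ^ 2 = β := Real.sq_sqrt (by linarith)
  have hD := Dfun_pos d β _ _ hd hβ hm
  obtain ⟨h0, h1, -⟩ := hm
  simp only at h0 h1
  have hev : (fun s => Ham α d β (θ s) (W s)) =ᶠ[nhds t]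
      fun s => Gf d β (θ s) - α * Real.sqrt β / Real.sqrt (Dfun d β (θ s) (W s)) := by
    have a := hθ.continuousAt.eventually (lt_mem_nhds h0)
    have b := hθ.continuousAt.eventually (gt_mem_nhds h1)
    filter_upwards [a, b] with s ha hb
    exact Ham_eq α d β _ _ hβ ha hb
  refine HasDerivAt.congr_of_eventuallyEq ?_ hev
  have hDd : HasDerivAt (fun s => Dfun d β (θ s) (W s))
      (d ^ 2 / β * (2 * (Real.sqrt β * Real.sin (θ t) - Real.cos (θ t)) *
        ((Real.sqrt β * Real.cos (θ t) + Real.sin (θ t)) * θ')) + 2 * W t * W') t := by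
    unfold Dfun
    have := (((((hθ.sin.const_mul (Real.sqrt β)).sub hθ.cos)).pow 2).const_mul (d ^ 2 / β)).add (hW.pow 2)
    refine this.congr_deriv ?_
    simp only [Pi.sub_apply]
    push_cast
    ring
  have hS : Real.sqrt (Dfun d β (θ t) (W t)) ≠ 0 := (Real.sqrt_pos.2 hD).ne'
  have := ((hasDerivAt_Gf d β (θ t) hd h0 h1).comp t hθ).sub
    ((hasDerivAt_const t (α * Real.sqrt β)).div (hDd.sqrt hD.ne') hS)
  refine this.congr_deriv ?_
  rw [F1_eq _ _ _ _ _ hβ, F2_eq _ _ _ _ _ hβ hd h0 h1]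
  set S := Real.sqrt (Dfun d β (θ t) (W t))
  set b := Real.sqrt β
  rw [← hbb]
  set gg := (1 / Real.sin (θ t) - b ^ 3 / Real.cos (θ t)) / d
  field_simp
  ring

lemma Ham_const (α d β : ℝ) (hβ : 1 ≤ β) (hd : 0 < d) (θ W : ℝ → ℝ)
    (h : IsSolution α d β θ W) (t s : ℝ) :
    Ham α d β (θ t) (W t) = Ham α d β (θ s) (W s) := by
  have key : ∀ t, HasDerivAt (fun s => Ham α d β (θ s) (W s)) 0 t := fun t => by
    refine (hasDerivAt_Ham α d β hβ hd θ W _ _ t (h.2.1 t) (h.2.2 t) (h.1 t)).congr_deriv ?_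
    ring
  exact is_const_of_deriv_eq_zero (fun t => (key t).differentiableAt) (fun t => (key t).deriv) t s

lemma field_smooth (α d β : ℝ) (hβ : 1 ≤ β) (hd : 0 < d) : ∀ p ∈ OmegaB β,
    ContDiffAt ℝ 1 (fun p : ℝ × ℝ => (F1 α d β p.1 p.2, F2 α d β p.1 p.2)) p := by
  have hb : 0 < Real.sqrt β := Real.sqrt_pos.2 (by linarith)
  rintro ⟨x, w⟩ hp
  have hD := Dfun_pos d β x w hd hβ hp
  obtain ⟨hs, hc, -, -⟩ := trig_facts hp.1 hp.2.1
  simp only at hs hc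
  have hDc : ContDiffAt ℝ 1 (fun p : ℝ × ℝ => Dfun d β p.1 p.2) (x, w) := by
    unfold Dfun
    fun_prop
  have hR : ContDiffAt ℝ 1 (fun p : ℝ × ℝ => Dfun d β p.1 p.2 ^ ((3 : ℝ) / 2)) (x, w) :=
    hDc.rpow_const_of_ne hD.ne'
  have hRp : Dfun d β x w ^ ((3 : ℝ) / 2) ≠ 0 := (Real.rpow_pos_of_pos hD _).ne'
  refine ContDiffAt.prodMk ?_ ?_
  · unfold F1
    exact ContDiffAt.div (by fun_prop) hR hRp
  · unfold F2
    refine ContDiffAt.sub (ContDiffAt.div (by fun_prop) (by fun_prop) ?_)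
      (ContDiffAt.div (by fun_prop) (contDiffAt_const.mul hR) ?_)
    · simp only; positivity
    · exact mul_ne_zero hb.ne' hRp

lemma sol_unique (α d β : ℝ) (hβ : 1 ≤ β) (hd : 0 < d) (θ W θ2 W2 : ℝ → ℝ)
    (h : IsSolution α d β θ W) (h2 : IsSolution α d β θ2 W2) (t0 : ℝ)
    (e1 : θ t0 = θ2 t0) (e2 : W t0 = W2 t0) (t : ℝ) : θ t = θ2 t ∧ W t = W2 t := by
  set v : ℝ × ℝ → ℝ × ℝ := fun p => (F1 α d β p.1 p.2, F2 α d β p.1 p.2) with hv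
  have hb : 0 < Real.sqrt β := Real.sqrt_pos.2 (by linarith)
  have hsm : ∀ p ∈ OmegaB β, ContDiffAt ℝ 1 v p := field_smooth α d β hβ hd
  set f : ℝ → ℝ × ℝ := fun t => (θ t, W t)
  set g : ℝ → ℝ × ℝ := fun t => (θ2 t, W2 t)
  have hf : ∀ t, HasDerivAt f (v (f t)) t := fun t => (h.2.1 t).prodMk (h.2.2 t)
  have hg : ∀ t, HasDerivAt g (v (g t)) t := fun t => (h2.2.1 t).prodMk (h2.2.2 t)
  have hfc : Continuous f := continuous_iff_continuousAt.2 fun t => (hf t).continuousAt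
  have hgc : Continuous g := continuous_iff_continuousAt.2 fun t => (hg t).continuousAt
  have hcl : IsClosed {t | f t = g t} := isClosed_eq hfc hgc
  have hop : IsOpen {t | f t = g t} := by
    rw [isOpen_iff_mem_nhds]
    intro t ht
    obtain ⟨K, s, hs, hK⟩ := (hsm (f t) (h.1 t)).exists_lipschitzOnWith
    have hs' : s ∈ nhds (g t) := by
      have : f t = g t := ht
      rwa [← this]
    have := ODE_solution_unique_of_eventually (v := fun _ => v) (s := fun _ => s) (K := K) (f := f) (g := g)
      (t₀ := t) (Filter.Eventually.of_forall fun _ => hK)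
      ((hfc.continuousAt.eventually hs).mono fun r hr => ⟨hf r, hr⟩)
      ((hgc.continuousAt.eventually hs').mono fun r hr => ⟨hg r, hr⟩) ht
    exact this
  have hu := IsClopen.eq_univ ⟨hcl, hop⟩ ⟨t0, show f t0 = g t0 from Prod.ext e1 e2⟩
  have : t ∈ {t | f t = g t} := hu ▸ mem_univ t
  exact Prod.ext_iff.1 this

lemma deriv_lim (f f' : ℝ → ℝ) (L c : ℝ) (h : ∀ t, HasDerivAt f (f' t) t)
    (hf : Filter.Tendsto f Filter.atTop (nhds L))
    (hf' : Filter.Tendsto f' Filter.atTop (nhds c)) : c = 0 := by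
  have hc : Continuous f := continuous_iff_continuousAt.2 fun t => (h t).continuousAt
  have : ∀ t : ℝ, ∃ ξ ∈ Ioo t (t + 1), f' ξ = (f (t + 1) - f t) / (t + 1 - t) := fun t =>
    exists_hasDerivAt_eq_slope f f' (by linarith) hc.continuousOn (fun x _ => h x)
  choose ξ hξ hξ2 using this
  have h1 : Filter.Tendsto ξ Filter.atTop Filter.atTop :=
    Filter.tendsto_atTop_mono (fun t => (hξ t).1.le) Filter.tendsto_id
  have h2 : Filter.Tendsto (fun t => f' (ξ t)) Filter.atTop (nhds c) := hf'.comp h1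
  have h3 : Filter.Tendsto (fun t => f (t + 1) - f t) Filter.atTop (nhds (L - L)) :=
    (hf.comp (Filter.tendsto_atTop_add_const_right _ 1 Filter.tendsto_id)).sub hf
  have h4 : (fun t => f' (ξ t)) = fun t => f (t + 1) - f t := by
    funext t
    rw [hξ2]
    simp
  rw [h4] at h2
  simpa using tendsto_nhds_unique h2 h3

lemma trap (f : ℝ → ℝ) (hf : Continuous f) (a b t0 : ℝ) (ha : ∀ t, f t ≠ a) (hb : ∀ t, f t ≠ b)
    (h0 : f t0 ∈ Ioo a b) (t : ℝ) : f t ∈ Ioo a b := by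
  refine ⟨?_, ?_⟩
  · by_contra hh
    obtain ⟨s, hs⟩ := mem_range_of_exists_le_of_exists_ge hf ⟨t, not_lt.1 hh⟩ ⟨t0, h0.1.le⟩
    exact ha s hs
  · by_contra hh
    obtain ⟨s, hs⟩ := mem_range_of_exists_le_of_exists_ge hf ⟨t0, h0.2.le⟩ ⟨t, not_lt.1 hh⟩
    exact hb s hs

lemma unimodal (h f : ℝ → ℝ) (a b c : ℝ) (hc : c ∈ Ioo a b)
    (hd : ∀ x ∈ Ioo a b, HasDerivAt h (f x) x) (hf : StrictAntiOn f (Ioo a b)) (h0 : f c = 0) :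
    StrictMonoOn h (Ioc a c) ∧ StrictAntiOn h (Ico c b) := by
  constructor
  · refine strictMonoOn_of_deriv_pos (convex_Ioc a c) ?_ ?_
    · intro x hx
      exact (hd x ⟨hx.1, hx.2.trans_lt hc.2⟩).continuousAt.continuousWithinAt
    · intro x hx
      rw [interior_Ioc] at hx
      have hx' : x ∈ Ioo a b := ⟨hx.1, hx.2.trans hc.2⟩
      rw [(hd x hx').deriv, ← h0]
      exact hf hx' hc hx.2
  · refine strictAntiOn_of_deriv_neg (convex_Ico c b) ?_ ?_
    · intro x hx
      exact (hd x ⟨hc.1.trans_le hx.1, hx.2⟩).continuousAt.continuousWithinAt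
    · intro x hx
      rw [interior_Ico] at hx
      have hx' : x ∈ Ioo a b := ⟨hc.1.trans hx.1, hx.2⟩
      rw [(hd x hx').deriv, ← h0]
      exact hf hc hx' hx.1

lemma unimodal_max (h : ℝ → ℝ) (a b c : ℝ) (hc : c ∈ Ioo a b)
    (H : StrictMonoOn h (Ioc a c) ∧ StrictAntiOn h (Ico c b)) (x : ℝ) (hx : x ∈ Ioo a b)
    (hxc : x ≠ c) : h x < h c := by
  rcases lt_or_gt_of_ne hxc with hl | hl
  · exact H.1 ⟨hx.1, hl.le⟩ ⟨hc.1, le_rfl⟩ hl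
  · exact H.2 ⟨le_rfl, hc.2⟩ ⟨hl.le, hx.2⟩ hl

lemma sqrt_D0 (d β θ : ℝ) (hβ : 1 ≤ β) (hd : 0 < d) :
    Real.sqrt (Dfun d β θ 0) = d / Real.sqrt β * |Real.sqrt β * Real.sin θ - Real.cos θ| := by
  have hb : 0 < Real.sqrt β := Real.sqrt_pos.2 (by linarith)
  have hbb : Real.sqrt β ^ 2 = β := Real.sq_sqrt (by linarith)
  have : Dfun d β θ 0 =
      (d / Real.sqrt β * |Real.sqrt β * Real.sin θ - Real.cos θ|) ^ 2 := by
    unfold Dfun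
    rw [mul_pow, sq_abs, div_pow, hbb]
    ring
  rw [this, Real.sqrt_sq (by positivity)]

lemma negF2_left (α d β θ : ℝ) (hβ : 1 ≤ β) (hd : 0 < d) (h0 : 0 < θ) (h1 : θ < thetaB β) :
    -F2 α d β θ 0 = (1 / Real.sin θ - Real.sqrt β ^ 3 / Real.cos θ) / d -
      α * Real.sqrt β ^ 2 / d * ((Real.sin θ + Real.sqrt β * Real.cos θ) /
        (Real.sqrt β * Real.sin θ - Real.cos θ) ^ 2) := by
  have hb : 0 < Real.sqrt β := Real.sqrt_pos.2 (by linarith)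
  have hq := q_neg β θ hβ h1 h0.le
  rw [F2_eq _ _ _ _ _ hβ hd h0 (h1.trans (thetaB_mem β hβ).2), sqrt_D0 d β θ hβ hd, abs_of_neg hq]
  set q := Real.sqrt β * Real.sin θ - Real.cos θ
  set gg := (1 / Real.sin θ - Real.sqrt β ^ 3 / Real.cos θ) / d
  have : q ≠ 0 := hq.ne
  field_simp
  ring

lemma negF2_right (α d β θ : ℝ) (hβ : 1 ≤ β) (hd : 0 < d) (h0 : thetaB β < θ)
    (h1 : θ < Real.pi / 2) :
    -F2 α d β θ 0 = (1 / Real.sin θ - Real.sqrt β ^ 3 / Real.cos θ) / d +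
      α * Real.sqrt β ^ 2 / d * ((Real.sin θ + Real.sqrt β * Real.cos θ) /
        (Real.sqrt β * Real.sin θ - Real.cos θ) ^ 2) := by
  have hb : 0 < Real.sqrt β := Real.sqrt_pos.2 (by linarith)
  have hq := q_pos β θ hβ h0 h1.le
  rw [F2_eq _ _ _ _ _ hβ hd ((thetaB_mem β hβ).1.trans h0) h1, sqrt_D0 d β θ hβ hd, abs_of_pos hq]
  set q := Real.sqrt β * Real.sin θ - Real.cos θ
  set gg := (1 / Real.sin θ - Real.sqrt β ^ 3 / Real.cos θ) / d
  have : q ≠ 0 := hq.ne'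
  field_simp
  ring

lemma Gderiv_anti (d β : ℝ) (hβ : 1 ≤ β) (hd : 0 < d) :
    StrictAntiOn (fun θ => (1 / Real.sin θ - Real.sqrt β ^ 3 / Real.cos θ) / d)
      (Ioo 0 (Real.pi / 2)) := by
  have hb : 0 < Real.sqrt β := Real.sqrt_pos.2 (by linarith)
  intro x hx y hy hxy
  obtain ⟨hsx, hcx, -, -⟩ := trig_facts hx.1 hx.2
  obtain ⟨hsy, hcy, -, -⟩ := trig_facts hy.1 hy.2
  have h1 : Real.sin x < Real.sin y :=
    Real.strictMonoOn_sin ⟨by linarith [hx.1, Real.pi_pos], hx.2.le⟩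
      ⟨by linarith [hy.1, Real.pi_pos], hy.2.le⟩ hxy
  have h2 : Real.cos y < Real.cos x :=
    Real.strictAntiOn_cos ⟨hx.1.le, by linarith [hx.2, Real.pi_pos]⟩
      ⟨hy.1.le, by linarith [hy.2, Real.pi_pos]⟩ hxy
  have h3 : 1 / Real.sin y < 1 / Real.sin x := one_div_lt_one_div_of_lt hsx h1
  have h4 : Real.sqrt β ^ 3 / Real.cos x < Real.sqrt β ^ 3 / Real.cos y :=
    div_lt_div_of_pos_left (by positivity) hcy h2
  exact div_lt_div_of_pos_right (by linarith) hd

lemma r_lt (β x y : ℝ) (hx : 0 ≤ Real.sin x + Real.sqrt β * Real.cos x)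
    (hy : 0 ≤ Real.sin y + Real.sqrt β * Real.cos y)
    (h : (Real.sqrt β * Real.sin y - Real.cos y) ^ 2 < (Real.sqrt β * Real.sin x - Real.cos x) ^ 2) :
    Real.sin x + Real.sqrt β * Real.cos x < Real.sin y + Real.sqrt β * Real.cos y := by
  refine lt_of_pow_lt_pow_left₀ 2 hy ?_
  have e : ∀ z, (Real.sin z + Real.sqrt β * Real.cos z) ^ 2 =
      1 + Real.sqrt β ^ 2 - (Real.sqrt β * Real.sin z - Real.cos z) ^ 2 := fun z => by
    linear_combination (1 + Real.sqrt β ^ 2) * Real.sin_sq_add_cos_sq z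
  rw [e, e]
  linarith

lemma negF2_left_anti (α d β : ℝ) (hα : 0 < α) (hβ : 1 ≤ β) (hd : 0 < d) :
    StrictAntiOn (fun θ => -F2 α d β θ 0) (Ioo 0 (thetaB β)) := by
  have hb : 0 < Real.sqrt β := Real.sqrt_pos.2 (by linarith)
  have hB := thetaB_mem β hβ
  intro x hx y hy hxy
  obtain ⟨hsx, hcx, -, -⟩ := trig_facts hx.1 (hx.2.trans hB.2)
  obtain ⟨hsy, hcy, -, -⟩ := trig_facts hy.1 (hy.2.trans hB.2)
  simp only
  rw [negF2_left _ _ _ _ hβ hd hx.1 hx.2, negF2_left _ _ _ _ hβ hd hy.1 hy.2]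
  have h1 := Gderiv_anti d β hβ hd ⟨hx.1, hx.2.trans hB.2⟩ ⟨hy.1, hy.2.trans hB.2⟩ hxy
  have h2 := q_strictMono β hβ ⟨hx.1.le, (hx.2.trans hB.2).le⟩ ⟨hy.1.le, (hy.2.trans hB.2).le⟩ hxy
  have h3 := q_neg β y hβ hy.2 hy.1.le
  simp only at h1 h2
  have h4 : (Real.sqrt β * Real.sin y - Real.cos y) ^ 2 <
      (Real.sqrt β * Real.sin x - Real.cos x) ^ 2 := by nlinarith
  have h5 := r_lt β x y (by positivity) (by positivity) h4
  have h6 : (Real.sin x + Real.sqrt β * Real.cos x) / (Real.sqrt β * Real.sin x - Real.cos x) ^ 2 <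
      (Real.sin y + Real.sqrt β * Real.cos y) / (Real.sqrt β * Real.sin y - Real.cos y) ^ 2 :=
    div_lt_div₀ h5 h4.le (by positivity) (by have := h3.ne; positivity)
  have h7 := mul_lt_mul_of_pos_left h6 (show 0 < α * Real.sqrt β ^ 2 / d by positivity)
  linarith

lemma negF2_right_anti (α d β : ℝ) (hα : 0 < α) (hβ : 1 ≤ β) (hd : 0 < d) :
    StrictAntiOn (fun θ => -F2 α d β θ 0) (Ioo (thetaB β) (Real.pi / 2)) := by
  have hb : 0 < Real.sqrt β := Real.sqrt_pos.2 (by linarith)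
  have hB := thetaB_mem β hβ
  intro x hx y hy hxy
  have hx0 := hB.1.trans hx.1
  have hy0 := hB.1.trans hy.1
  obtain ⟨hsx, hcx, -, -⟩ := trig_facts hx0 hx.2
  obtain ⟨hsy, hcy, -, -⟩ := trig_facts hy0 hy.2
  simp only
  rw [negF2_right _ _ _ _ hβ hd hx.1 hx.2, negF2_right _ _ _ _ hβ hd hy.1 hy.2]
  have h1 := Gderiv_anti d β hβ hd ⟨hx0, hx.2⟩ ⟨hy0, hy.2⟩ hxy
  have h2 := q_strictMono β hβ ⟨hx0.le, hx.2.le⟩ ⟨hy0.le, hy.2.le⟩ hxy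
  have h3 := q_pos β x hβ hx.1 hx.2.le
  simp only at h1 h2
  have h4 : (Real.sqrt β * Real.sin x - Real.cos x) ^ 2 <
      (Real.sqrt β * Real.sin y - Real.cos y) ^ 2 := by nlinarith
  have h5 := r_lt β y x (by positivity) (by positivity) h4
  have h6 : (Real.sin y + Real.sqrt β * Real.cos y) / (Real.sqrt β * Real.sin y - Real.cos y) ^ 2 <
      (Real.sin x + Real.sqrt β * Real.cos x) / (Real.sqrt β * Real.sin x - Real.cos x) ^ 2 :=
    div_lt_div₀ h5 h4.le (by positivity) (by have := h3.ne'; positivity)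
  have h7 := mul_lt_mul_of_pos_left h6 (show 0 < α * Real.sqrt β ^ 2 / d by positivity)
  linarith

lemma exists_left (α d β : ℝ) (hα : 0 < α) (hβ : 1 ≤ β) (hd : 0 < d) :
    ∃ x ∈ Ioo 0 (thetaB β), F2 α d β x 0 = 0 := by
  have hb : 0 < Real.sqrt β := Real.sqrt_pos.2 (by linarith)
  have hB := thetaB_mem β hβ
  obtain ⟨hs, hc, -, -⟩ := trig_facts hB.1 hB.2
  let N : ℝ → ℝ := fun θ => (Real.cos θ - Real.sqrt β ^ 3 * Real.sin θ) *
    (Real.sqrt β * Real.sin θ - Real.cos θ) ^ 2 -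
    α * Real.sqrt β ^ 2 * Real.sin θ * Real.cos θ * (Real.sin θ + Real.sqrt β * Real.cos θ)
  have hN : Continuous N := by fun_prop
  have h0 : 0 < N 0 := by simp [N]
  have h1 : N (thetaB β) < 0 := by
    simp only [N, thetaB_eq β hβ]
    have : 0 < α * Real.sqrt β ^ 2 * Real.sin (thetaB β) * Real.cos (thetaB β) *
      (Real.sin (thetaB β) + Real.sqrt β * Real.cos (thetaB β)) := by positivity
    linarith
  obtain ⟨x, hx, hx0⟩ := intermediate_value_Ioo' hB.1.le hN.continuousOn ⟨h1, h0⟩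
  refine ⟨x, hx, ?_⟩
  obtain ⟨hs, hc, -, -⟩ := trig_facts hx.1 (hx.2.trans hB.2)
  have hq := (q_neg β x hβ hx.2 hx.1.le).ne
  rw [← neg_eq_zero, negF2_left _ _ _ _ hβ hd hx.1 hx.2]
  simp only [N] at hx0
  set q := Real.sqrt β * Real.sin x - Real.cos x
  field_simp
  linear_combination hx0

lemma exists_right (α d β : ℝ) (hα : 0 < α) (hβ : 1 ≤ β) (hd : 0 < d) :
    ∃ x ∈ Ioo (thetaB β) (Real.pi / 2), F2 α d β x 0 = 0 := by
  have hb : 0 < Real.sqrt β := Real.sqrt_pos.2 (by linarith)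
  have hB := thetaB_mem β hβ
  obtain ⟨hs, hc, -, -⟩ := trig_facts hB.1 hB.2
  let N : ℝ → ℝ := fun θ => (Real.cos θ - Real.sqrt β ^ 3 * Real.sin θ) *
    (Real.sqrt β * Real.sin θ - Real.cos θ) ^ 2 +
    α * Real.sqrt β ^ 2 * Real.sin θ * Real.cos θ * (Real.sin θ + Real.sqrt β * Real.cos θ)
  have hN : Continuous N := by fun_prop
  have h0 : N (Real.pi / 2) < 0 := by
    simp [N]
    positivity
  have h1 : 0 < N (thetaB β) := by
    simp only [N, thetaB_eq β hβ]
    have : 0 < α * Real.sqrt β ^ 2 * Real.sin (thetaB β) * Real.cos (thetaB β) *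
      (Real.sin (thetaB β) + Real.sqrt β * Real.cos (thetaB β)) := by positivity
    linarith
  obtain ⟨x, hx, hx0⟩ := intermediate_value_Ioo' hB.2.le hN.continuousOn ⟨h0, h1⟩
  refine ⟨x, hx, ?_⟩
  obtain ⟨hs, hc, -, -⟩ := trig_facts (hB.1.trans hx.1) hx.2
  have hq := (q_pos β x hβ hx.1 hx.2.le).ne'
  rw [← neg_eq_zero, negF2_right _ _ _ _ hβ hd hx.1 hx.2]
  simp only [N] at hx0
  set q := Real.sqrt β * Real.sin x - Real.cos x
  field_simp
  linear_combination hx0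

lemma Gf_concave (d β : ℝ) (hβ : 1 ≤ β) (hd : 0 < d) :
    ConcaveOn ℝ (Ioo 0 (Real.pi / 2)) (Gf d β) := by
  have hder : ∀ x ∈ Ioo 0 (Real.pi / 2), HasDerivAt (Gf d β) _ x :=
    fun x hx => hasDerivAt_Gf d β x hd hx.1 hx.2
  refine AntitoneOn.concaveOn_of_deriv (convex_Ioo _ _)
    (fun x hx => (hder x hx).continuousAt.continuousWithinAt) ?_ ?_
  · rw [interior_Ioo]
    exact fun x hx => (hder x hx).differentiableAt.differentiableWithinAt
  · rw [interior_Ioo]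
    intro x hx y hy hxy
    rw [(hder x hx).deriv, (hder y hy).deriv]
    exact (Gderiv_anti d β hβ hd).antitoneOn hx hy hxy

lemma Ham_mono (α d β θ W : ℝ) (hα : 0 < α) (hβ : 1 ≤ β) (hd : 0 < d) (h0 : 0 < θ)
    (h1 : θ < Real.pi / 2) (h2 : θ ≠ thetaB β) : Ham α d β θ 0 ≤ Ham α d β θ W := by
  have hD : 0 < Dfun d β θ 0 := Dfun_pos d β θ 0 hd hβ ⟨h0, h1, fun h => h2 (Prod.ext_iff.1 h).1⟩
  have hle : Dfun d β θ 0 ≤ Dfun d β θ W := by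
    unfold Dfun
    nlinarith [sq_nonneg W]
  rw [Ham_eq _ _ _ _ _ hβ h0 h1, Ham_eq _ _ _ _ _ hβ h0 h1]
  have := div_le_div_of_nonneg_left (show 0 ≤ α * Real.sqrt β by positivity) (Real.sqrt_pos.2 hD)
    (Real.sqrt_le_sqrt hle)
  linarith

lemma Ham_lt_Gf (α d β θ W : ℝ) (hα : 0 < α) (hβ : 1 ≤ β) (hd : 0 < d)
    (h : (θ, W) ∈ OmegaB β) : Ham α d β θ W < Gf d β θ := by
  have hD := Real.sqrt_pos.2 (Dfun_pos d β θ W hd hβ h)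
  have hb : 0 < Real.sqrt β := Real.sqrt_pos.2 (by linarith)
  rw [Ham_eq _ _ _ _ _ hβ h.1 h.2.1]
  have : 0 < α * Real.sqrt β / Real.sqrt (Dfun d β θ W) := by positivity
  linarith

lemma F1_zero (α d β θ W : ℝ) (hα : 0 < α) (hβ : 1 ≤ β) (hd : 0 < d)
    (h : (θ, W) ∈ OmegaB β) (h1 : F1 α d β θ W = 0) : W = 0 := by
  have hD := Real.sqrt_pos.2 (Dfun_pos d β θ W hd hβ h)
  have hb : 0 < Real.sqrt β := Real.sqrt_pos.2 (by linarith)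
  rw [F1_eq _ _ _ _ _ hβ, div_eq_zero_iff] at h1
  rcases h1 with h1 | h1
  · rcases mul_eq_zero.1 h1 with h1 | h1
    · exact absurd h1 (by positivity)
    · exact h1
  · exact absurd h1 (by positivity)

lemma no_conv (α d β E L ε a b : ℝ) (hα : 0 < α) (hβ : 1 ≤ β) (hd : 0 < d) (θ W : ℝ → ℝ)
    (h : IsSolution α d β θ W) (hε : ε ^ 2 = 1) (ha : 0 < a) (hb : b < Real.pi / 2)
    (hE : ∀ t, Ham α d β (θ t) (W t) = E)
    (hI : ∀ t, θ t ∈ Icc a b) (hG : ∀ x ∈ Icc a b, E < Gf d β x)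
    (hne : ∀ p ∈ OmegaB β, F1 α d β p.1 p.2 = 0 → F2 α d β p.1 p.2 = 0 → Ham α d β p.1 p.2 ≠ E)
    (hL : Filter.Tendsto θ Filter.atTop (nhds L))
    (hW : ∀ᶠ t in Filter.atTop, W t = ε * Real.sqrt (W t ^ 2)) : False := by
  have hbp : 0 < Real.sqrt β := Real.sqrt_pos.2 (by linarith)
  have hLm : L ∈ Icc a b := isClosed_Icc.mem_of_tendsto hL (Filter.Eventually.of_forall hI)
  have hL0 : 0 < L := ha.trans_le hLm.1
  have hL1 : L < Real.pi / 2 := hLm.2.trans_lt hb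
  have hGL := hG L hLm
  let P : ℝ → ℝ := fun x => (α * Real.sqrt β / (Gf d β x - E)) ^ 2 -
    d ^ 2 / β * (Real.sqrt β * Real.sin x - Real.cos x) ^ 2
  have hPc : ContinuousAt P L := by
    have h1 : ContinuousAt (Gf d β) L := (hasDerivAt_Gf d β L hd hL0 hL1).continuousAt
    have h2 : ContinuousAt (fun x => α * Real.sqrt β / (Gf d β x - E)) L :=
      continuousAt_const.div (h1.sub continuousAt_const) (by linarith)
    refine (h2.pow 2).sub ?_
    fun_prop
  have hWP : ∀ t, W t ^ 2 = P (θ t) := by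
    intro t
    have hD := Dfun_pos d β _ _ hd hβ (h.1 t)
    have hS := Real.sqrt_pos.2 hD
    have e := hE t
    have hg := hG _ (hI t)
    rw [Ham_eq _ _ _ _ _ hβ (h.1 t).1 (h.1 t).2.1] at e
    have e2 : α * Real.sqrt β / (Gf d β (θ t) - E) = Real.sqrt (Dfun d β (θ t) (W t)) := by
      have : Gf d β (θ t) - E = α * Real.sqrt β / Real.sqrt (Dfun d β (θ t) (W t)) := by linarith
      rw [this]
      field_simp
    simp only [P]
    rw [e2, Real.sq_sqrt hD.le]
    unfold Dfun
    ring
  have hW2 : Filter.Tendsto (fun t => W t ^ 2) Filter.atTop (nhds (P L)) := by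
    have : (fun t => W t ^ 2) = fun t => P (θ t) := funext hWP
    rw [this]
    exact hPc.tendsto.comp hL
  have hP0 : 0 ≤ P L := ge_of_tendsto' hW2 fun t => sq_nonneg _
  set V := ε * Real.sqrt (P L) with hV
  have hWV : Filter.Tendsto W Filter.atTop (nhds V) :=
    Filter.Tendsto.congr' (hW.mono fun t ht => ht.symm)
      (((Real.continuous_sqrt.tendsto _).comp hW2).const_mul ε)
  have hV2 : V ^ 2 = P L := by
    rw [hV, mul_pow, hε, Real.sq_sqrt hP0, one_mul]
  have hx : 0 < α * Real.sqrt β / (Gf d β L - E) := by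
    have : 0 < Gf d β L - E := by linarith
    positivity
  have hDV : Dfun d β L V = (α * Real.sqrt β / (Gf d β L - E)) ^ 2 := by
    unfold Dfun
    rw [hV2]
    simp only [P]
    ring
  have hΩ : (L, V) ∈ OmegaB β := by
    refine ⟨hL0, hL1, ?_⟩
    intro hh
    obtain ⟨e1, e2⟩ := Prod.ext_iff.1 hh
    simp only at e1 e2
    have : Dfun d β L V = 0 := by
      unfold Dfun
      rw [e1, e2, thetaB_eq β hβ]
      ring
    rw [hDV] at this
    exact (pow_pos hx 2).ne' this
  have hcont := (field_smooth α d β hβ hd _ hΩ).continuousAt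
  have hlim := hcont.tendsto.comp (hL.prodMk_nhds hWV)
  have l1 := (continuous_fst.tendsto _).comp hlim
  have l2 := (continuous_snd.tendsto _).comp hlim
  have z1 := deriv_lim θ _ L _ h.2.1 hL l1
  have z2 := deriv_lim W _ V _ h.2.2 hWV l2
  refine hne (L, V) hΩ z1 z2 ?_
  simp only
  rw [Ham_eq _ _ _ _ _ hβ hL0 hL1, hDV, Real.sqrt_sq hx.le]
  have : Gf d β L - E ≠ 0 := by linarith
  field_simp
  ring

lemma exists_zero (α d β E a b : ℝ) (hα : 0 < α) (hβ : 1 ≤ β) (hd : 0 < d) (θ W : ℝ → ℝ)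
    (h : IsSolution α d β θ W) (ha : 0 < a) (hb : b < Real.pi / 2)
    (hE : ∀ t, Ham α d β (θ t) (W t) = E)
    (hI : ∀ t, θ t ∈ Icc a b) (hG : ∀ x ∈ Icc a b, E < Gf d β x)
    (hne : ∀ p ∈ OmegaB β, F1 α d β p.1 p.2 = 0 → F2 α d β p.1 p.2 = 0 → Ham α d β p.1 p.2 ≠ E)
    (t0 : ℝ) : ∃ t > t0, W t = 0 := by
  by_contra! hcon
  have hbp : 0 < Real.sqrt β := Real.sqrt_pos.2 (by linarith)
  have hWc : Continuous W := continuous_iff_continuousAt.2 fun t => (h.2.2 t).continuousAt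
  have hθc : Continuous θ := continuous_iff_continuousAt.2 fun t => (h.2.1 t).continuousAt
  have hS : ∀ t, 0 < Real.sqrt (Dfun d β (θ t) (W t)) := fun t =>
    Real.sqrt_pos.2 (Dfun_pos d β _ _ hd hβ (h.1 t))
  set t1 := t0 + 1 with ht1
  have hsign : ∀ t ≥ t1, 0 < W t1 * W t := by
    intro t ht
    by_contra hneg
    have hne1 := hcon t1 (by linarith)
    have hnet := hcon t (by linarith)
    have hlt : W t1 * W t < 0 := lt_of_le_of_ne (not_lt.1 hneg) (mul_ne_zero hne1 hnet)
    have : (0 : ℝ) ∈ (fun s => W t1 * W s) '' Icc t1 t :=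
      intermediate_value_Icc' ht (continuous_const.mul hWc).continuousOn
        ⟨hlt.le, mul_self_nonneg _⟩
    obtain ⟨s, hs, hs0⟩ := this
    rcases mul_eq_zero.1 hs0 with h0 | h0
    · exact hne1 h0
    · exact hcon s (by linarith [hs.1]) h0
  -- the function `s ↦ θ (max s t1)` is monotone or antitone
  have hder : ∀ t, deriv θ t = α * Real.sqrt β * W t / Real.sqrt (Dfun d β (θ t) (W t)) ^ 3 :=
    fun t => by rw [(h.2.1 t).deriv, F1_eq _ _ _ _ _ hβ]
  have hev : ∀ f : ℝ → ℝ, (∀ t ≥ t1, f t = θ t) → f =ᶠ[Filter.atTop] θ := fun f hf =>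
    (Filter.eventually_ge_atTop t1).mono hf
  rcases lt_or_gt_of_ne (hcon t1 (by linarith)) with hs | hs
  · have hW : ∀ t ≥ t1, W t < 0 := fun t ht => by
      have := hsign t ht
      exact neg_of_mul_pos_right this hs.le
    have hanti : AntitoneOn θ (Ici t1) := by
      refine antitoneOn_of_deriv_nonpos (convex_Ici t1) hθc.continuousOn
        (fun x _ => (h.2.1 x).differentiableAt.differentiableWithinAt) ?_
      intro x hx
      rw [interior_Ici] at hx
      rw [hder]
      have := hS x
      exact div_nonpos_of_nonpos_of_nonneg
        (mul_nonpos_of_nonneg_of_nonpos (by positivity) (hW x (le_of_lt hx)).le) (by positivity)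
    have hm : Antitone (fun s => θ (max s t1)) := fun x y hxy =>
      hanti (mem_Ici.2 (le_max_right _ _)) (mem_Ici.2 (le_max_right _ _)) (max_le_max_right _ hxy)
    have hlim := tendsto_atTop_ciInf hm ⟨a, by rintro _ ⟨s, rfl⟩; exact (hI _).1⟩
    refine no_conv α d β E _ (-1) a b hα hβ hd θ W h (by norm_num) ha hb hE hI hG hne
      (hlim.congr' (hev _ fun t ht => by rw [max_eq_left ht])) ?_
    filter_upwards [Filter.eventually_ge_atTop t1] with t ht
    rw [Real.sqrt_sq_eq_abs, abs_of_neg (hW t ht)]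
    ring
  · have hW : ∀ t ≥ t1, 0 < W t := fun t ht => by
      have := hsign t ht
      exact pos_of_mul_pos_right this hs.le
    have hmono : MonotoneOn θ (Ici t1) := by
      refine monotoneOn_of_deriv_nonneg (convex_Ici t1) hθc.continuousOn
        (fun x _ => (h.2.1 x).differentiableAt.differentiableWithinAt) ?_
      intro x hx
      rw [interior_Ici] at hx
      rw [hder]
      have := hS x
      have := hW x (le_of_lt hx)
      positivity
    have hm : Monotone (fun s => θ (max s t1)) := fun x y hxy =>
      hmono (mem_Ici.2 (le_max_right _ _)) (mem_Ici.2 (le_max_right _ _)) (max_le_max_right _ hxy)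
    have hlim := tendsto_atTop_ciSup hm ⟨b, by rintro _ ⟨s, rfl⟩; exact (hI _).2⟩
    refine no_conv α d β E _ 1 a b hα hβ hd θ W h (by norm_num) ha hb hE hI hG hne
      (hlim.congr' (hev _ fun t ht => by rw [max_eq_left ht])) ?_
    filter_upwards [Filter.eventually_ge_atTop t1] with t ht
    rw [Real.sqrt_sq_eq_abs, abs_of_pos (hW t ht)]
    ring

lemma reflect (α d β : ℝ) (hβ : 1 ≤ β) (hd : 0 < d) (θ W : ℝ → ℝ)
    (h : IsSolution α d β θ W) (c : ℝ) (hc : W c = 0) (t : ℝ) :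
    θ t = θ (2 * c - t) ∧ W t = -W (2 * c - t) := by
  have hDneg : ∀ x w, Dfun d β x (-w) = Dfun d β x w := fun x w => by
    unfold Dfun
    ring
  refine sol_unique α d β hβ hd θ W (fun t => θ (2 * c - t)) (fun t => -W (2 * c - t)) h ?_ c ?_ ?_ t
  · refine ⟨fun t => ?_, fun t => ?_, fun t => ?_⟩
    · obtain ⟨h0, h1, h2⟩ := h.1 (2 * c - t)
      refine ⟨h0, h1, fun hh => h2 ?_⟩
      obtain ⟨e1, e2⟩ := Prod.ext_iff.1 hh
      simp only at e1 e2
      exact Prod.ext e1 (by simpa using e2)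
    · have := (h.2.1 (2 * c - t)).comp t ((hasDerivAt_id t).const_sub (2 * c))
      refine this.congr_deriv ?_
      unfold F1
      rw [hDneg]
      ring
    · have := ((h.2.2 (2 * c - t)).comp t ((hasDerivAt_id t).const_sub (2 * c))).neg
      refine this.congr_deriv ?_
      unfold F2
      rw [hDneg]
      ring
  · congr 1
    ring
  · rw [show 2 * c - c = c by ring, hc, neg_zero]

lemma forward (α d β : ℝ) (hα : 0 < α) (hβ : 1 ≤ β) (hd : 0 < d) (θs θss : ℝ)
    (h1 : 0 < θs) (h2 : θs < thetaB β) (h3 : thetaB β < θss) (h4 : θss < Real.pi / 2)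
    (hA : StrictAntiOn (fun x => Ham α d β x 0) (Ico θs (thetaB β)))
    (hM : StrictMonoOn (fun x => Ham α d β x 0) (Ioc (thetaB β) θss))
    (heq : ∀ p ∈ OmegaB β, F1 α d β p.1 p.2 = 0 → F2 α d β p.1 p.2 = 0 →
        p = (θs, 0) ∨ p = (θss, 0))
    (θ W : ℝ → ℝ) (h : IsSolution α d β θ W) (hI : ∀ t, θ t ∈ Ioo θs θss)
    (hE1 : Ham α d β (θ 0) (W 0) < Ham α d β θs 0)
    (hE2 : Ham α d β (θ 0) (W 0) < Ham α d β θss 0) : IsLeapfrog β θ W := by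
  set E := Ham α d β (θ 0) (W 0)
  have hB := thetaB_mem β hβ
  have hE : ∀ t, Ham α d β (θ t) (W t) = E := fun t => Ham_const α d β hβ hd θ W h t 0
  have hs : (θs, (0 : ℝ)) ∈ OmegaB β :=
    ⟨h1, h2.trans hB.2, fun hh => h2.ne (Prod.ext_iff.1 hh).1⟩
  have hss : (θss, (0 : ℝ)) ∈ OmegaB β :=
    ⟨hB.1.trans h3, h4, fun hh => h3.ne' (Prod.ext_iff.1 hh).1⟩
  have hG : ∀ x ∈ Icc θs θss, E < Gf d β x := by
    intro x hx
    have := (Gf_concave d β hβ hd).min_le_of_mem_Icc ⟨hs.1, hs.2.1⟩ ⟨hss.1, hss.2.1⟩ hx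
    exact lt_of_lt_of_le (lt_min (hE1.trans (Ham_lt_Gf α d β _ _ hα hβ hd hs))
      (hE2.trans (Ham_lt_Gf α d β _ _ hα hβ hd hss))) this
  have hne : ∀ p ∈ OmegaB β, F1 α d β p.1 p.2 = 0 → F2 α d β p.1 p.2 = 0 →
      Ham α d β p.1 p.2 ≠ E := by
    intro p hp e1 e2
    rcases heq p hp e1 e2 with rfl | rfl
    · exact hE1.ne'
    · exact hE2.ne'
  have hz := exists_zero α d β E θs θss hα hβ hd θ W h h1 h4 hE
    (fun t => Ioo_subset_Icc_self (hI t)) hG hne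
  obtain ⟨ta, -, hta⟩ := hz 0
  obtain ⟨tb, hab, htb⟩ := hz ta
  have hper : ∀ t, θ (t + 2 * (tb - ta)) = θ t ∧ W (t + 2 * (tb - ta)) = W t := by
    intro t
    have ra := reflect α d β hβ hd θ W h ta hta t
    have rb := reflect α d β hβ hd θ W h tb htb (t + 2 * (tb - ta))
    rw [show 2 * tb - (t + 2 * (tb - ta)) = 2 * ta - t by ring] at rb
    exact ⟨rb.1.trans ra.1.symm, rb.2.trans ra.2.symm⟩
  have hnc : ¬ ∀ t, θ t = θ 0 := by
    intro hc
    have hF1 : ∀ t, F1 α d β (θ t) (W t) = 0 := fun t => by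
      have hcc : HasDerivAt θ 0 t := by
        rw [show θ = fun _ => θ 0 from funext hc]
        exact hasDerivAt_const _ _
      exact (h.2.1 t).unique hcc
    have hW0 : ∀ t, W t = 0 := fun t => F1_zero α d β _ _ hα hβ hd (h.1 t) (hF1 t)
    have hF2 : F2 α d β (θ 0) (W 0) = 0 := by
      refine (h.2.2 0).unique ?_
      rw [show W = fun _ => 0 from funext hW0]
      exact hasDerivAt_const _ _
    exact hne _ (h.1 0) (hF1 0) hF2 rfl
  have hθc : Continuous θ := continuous_iff_continuousAt.2 fun t => (h.2.1 t).continuousAt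
  have hT : 0 < 2 * (tb - ta) := by linarith
  have hp : Function.Periodic θ (2 * (tb - ta)) := fun t => (hper t).1
  have hcpt : IsCompact (range θ) := by
    rw [← hp.image_Icc hT 0]
    exact isCompact_Icc.image hθc
  obtain ⟨_, ⟨tm, rfl⟩, hmax⟩ := hcpt.exists_isGreatest (range_nonempty θ)
  obtain ⟨_, ⟨tn, rfl⟩, hmin⟩ := hcpt.exists_isLeast (range_nonempty θ)
  have hmax' : ∀ t, θ t ≤ θ tm := fun t => hmax ⟨t, rfl⟩
  have hmin' : ∀ t, θ tn ≤ θ t := fun t => hmin ⟨t, rfl⟩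
  have hWm : W tm = 0 := F1_zero α d β _ _ hα hβ hd (h.1 tm)
    (IsLocalMax.hasDerivAt_eq_zero (Filter.Eventually.of_forall hmax') (h.2.1 tm))
  have hWn : W tn = 0 := F1_zero α d β _ _ hα hβ hd (h.1 tn)
    (IsLocalMin.hasDerivAt_eq_zero (Filter.Eventually.of_forall hmin') (h.2.1 tn))
  have hlt : θ tn < θ tm := by
    refine lt_of_le_of_ne (hmin' _) fun hh => hnc fun t => ?_
    have a1 := hmax' t
    have a2 := hmin' t
    have a3 := hmax' 0
    have a4 := hmin' 0
    linarith
  have hne' : ∀ t, W t = 0 → θ t ≠ thetaB β := fun t ht hh => (h.1 t).2.2 (Prod.ext hh ht)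
  have hEm := hE tm
  have hEn := hE tn
  rw [hWm] at hEm
  rw [hWn] at hEn
  have hn : θ tn < thetaB β := by
    by_contra hh
    have hgt : thetaB β < θ tn := lt_of_le_of_ne (not_lt.1 hh) (hne' tn hWn).symm
    have := hM ⟨hgt, (hI tn).2.le⟩ ⟨hgt.trans hlt, (hI tm).2.le⟩ hlt
    simp only at this
    linarith
  have hm : thetaB β < θ tm := by
    by_contra hh
    have hgt : θ tm < thetaB β := lt_of_le_of_ne (not_lt.1 hh) (hne' tm hWm)
    have := hA ⟨(hI tn).1.le, hn⟩ ⟨(hI tm).1.le, hgt⟩ hlt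
    simp only at this
    linarith
  refine ⟨⟨_, hT, hper⟩, ⟨tn, tm, fun hh => hlt.ne (Prod.ext_iff.1 hh).1⟩,
    ⟨tn, ⟨(h.1 tn).1, hn⟩, hWn⟩, ⟨tm, ⟨hm, (h.1 tm).2.1⟩, hWm⟩⟩

/-- Theorem 3.2: the system has exactly two equilibrium points (θ_*, 0) and
(θ_**, 0) with 0 < θ_* < θ_β < θ_** < π/2, and a solution with initial data
(θ₀, W₀) ∈ Ω_β is a leapfrogging solution iff θ₀ ∈ (θ_*, θ_**) and
H(θ₀, W₀) < min{H(θ_*, 0), H(θ_**, 0)}. -/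
theorem leapfrog_iff_same_sign
    (α d β : ℝ) (hα : 0 < α) (hα' : α < 1 / 3) (hd : 0 < d) (hβ : 1 ≤ β) :
    ∃ θs θss : ℝ,
      0 < θs ∧ θs < thetaB β ∧ thetaB β < θss ∧ θss < Real.pi / 2 ∧
      (F1 α d β θs 0 = 0 ∧ F2 α d β θs 0 = 0) ∧
      (F1 α d β θss 0 = 0 ∧ F2 α d β θss 0 = 0) ∧
      (∀ p ∈ OmegaB β, F1 α d β p.1 p.2 = 0 → F2 α d β p.1 p.2 = 0 →
        p = (θs, 0) ∨ p = (θss, 0)) ∧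
      ∀ θ₀ W₀ : ℝ, (θ₀, W₀) ∈ OmegaB β →
        ∀ θ W : ℝ → ℝ, IsSolution α d β θ W → θ 0 = θ₀ → W 0 = W₀ →
          (IsLeapfrog β θ W ↔
            θ₀ ∈ Set.Ioo θs θss ∧
              Ham α d β θ₀ W₀ < min (Ham α d β θs 0) (Ham α d β θss 0)) := by
  have hB := thetaB_mem β hβ
  obtain ⟨θs, hs, hs0⟩ := exists_left α d β hα hβ hd
  obtain ⟨θss, hss, hss0⟩ := exists_right α d β hα hβ hd
  have hF1 : ∀ x, F1 α d β x 0 = 0 := fun x => by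
    unfold F1
    simp
  have hL := negF2_left_anti α d β hα hβ hd
  have hR := negF2_right_anti α d β hα hβ hd
  have hder : ∀ x, 0 < x → x < Real.pi / 2 → x ≠ thetaB β →
      HasDerivAt (fun x => Ham α d β x 0) (-F2 α d β x 0) x := by
    intro x hx0 hx1 hx2
    refine (hasDerivAt_Ham α d β hβ hd (fun x => x) (fun _ => 0) 1 0 x (hasDerivAt_id x)
      (hasDerivAt_const _ _) ⟨hx0, hx1, fun hh => hx2 (Prod.ext_iff.1 hh).1⟩).congr_deriv ?_
    ring
  have hUL := unimodal (fun x => Ham α d β x 0) (fun x => -F2 α d β x 0) 0 (thetaB β) θs hs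
    (fun x hx => hder x hx.1 (hx.2.trans hB.2) hx.2.ne) hL (by rw [hs0, neg_zero])
  have hUR := unimodal (fun x => Ham α d β x 0) (fun x => -F2 α d β x 0) (thetaB β) (Real.pi / 2)
    θss hss (fun x hx => hder x (hB.1.trans hx.1) hx.2 hx.1.ne') hR
    (by rw [hss0, neg_zero])
  have hML := unimodal_max _ _ _ _ hs hUL
  have hMR := unimodal_max _ _ _ _ hss hUR
  have heq : ∀ p ∈ OmegaB β, F1 α d β p.1 p.2 = 0 → F2 α d β p.1 p.2 = 0 →
        p = (θs, 0) ∨ p = (θss, 0) := by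
    rintro ⟨x, w⟩ hp e1 e2
    have hw : w = 0 := F1_zero α d β x w hα hβ hd hp e1
    subst hw
    simp only at e2
    have hx : x ≠ thetaB β := fun hh => hp.2.2 (by rw [hh])
    rcases lt_or_gt_of_ne hx with hx | hx
    · left
      have hxs : x = θs := hL.injOn ⟨hp.1, hx⟩ hs (by simp only [e2, hs0])
      rw [hxs]
    · right
      have hxs : x = θss := hR.injOn ⟨hx, hp.2.1⟩ hss (by simp only [e2, hss0])
      rw [hxs]
  refine ⟨θs, θss, hs.1, hs.2, hss.1, hss.2, ⟨hF1 _, hs0⟩, ⟨hF1 _, hss0⟩, heq, ?_⟩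
  intro θ₀ W₀ h0 θ W h e1 e2
  subst e1 e2
  have hθc : Continuous θ := continuous_iff_continuousAt.2 fun t => (h.2.1 t).continuousAt
  have hE : ∀ t, Ham α d β (θ t) (W t) = Ham α d β (θ 0) (W 0) := fun t =>
    Ham_const α d β hβ hd θ W h t 0
  have nes : Ham α d β (θ 0) (W 0) < Ham α d β θs 0 → ∀ t, θ t ≠ θs := by
    intro hlt t ht
    have := Ham_mono α d β θs (W t) hα hβ hd hs.1 (hs.2.trans hB.2) hs.2.ne
    have e := hE t
    rw [ht] at e
    linarith
  have ness : Ham α d β (θ 0) (W 0) < Ham α d β θss 0 → ∀ t, θ t ≠ θss := by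
    intro hlt t ht
    have := Ham_mono α d β θss (W t) hα hβ hd (hB.1.trans hss.1) hss.2 hss.1.ne'
    have e := hE t
    rw [ht] at e
    linarith
  constructor
  · rintro ⟨-, ⟨t, s, hts⟩, ⟨t1, ht1, hW1⟩, ⟨t2, ht2, hW2⟩⟩
    -- an equilibrium is never reached
    have hneq : ∀ x r, (x, (0 : ℝ)) ∈ OmegaB β → F2 α d β x 0 = 0 → W r = 0 → θ r ≠ x := by
      intro x r hx hx2 hWr hr
      have hsol : IsSolution α d β (fun _ => x) (fun _ => 0) := by
        refine ⟨fun _ => hx, fun t => ?_, fun t => ?_⟩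
        · rw [hF1]
          exact hasDerivAt_const _ _
        · rw [hx2]
          exact hasDerivAt_const _ _
      have hu := sol_unique α d β hβ hd θ W _ _ h hsol r hr hWr
      exact hts (Prod.ext ((hu t).1.trans (hu s).1.symm) ((hu t).2.trans (hu s).2.symm))
    have hE1 : Ham α d β (θ 0) (W 0) < Ham α d β θs 0 := by
      rw [← hE t1, hW1]
      exact hML _ ht1 (hneq θs t1 ⟨hs.1, hs.2.trans hB.2, fun hh => hs.2.ne (Prod.ext_iff.1 hh).1⟩
        hs0 hW1)
    have hE2 : Ham α d β (θ 0) (W 0) < Ham α d β θss 0 := by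
      rw [← hE t2, hW2]
      exact hMR _ ht2 (hneq θss t2
        ⟨hB.1.trans hss.1, hss.2, fun hh => hss.1.ne' (Prod.ext_iff.1 hh).1⟩ hss0 hW2)
    refine ⟨?_, lt_min hE1 hE2⟩
    refine trap θ hθc θs θss t1 (nes hE1) (ness hE2) ⟨?_, ht1.2.trans hss.1⟩ 0
    by_contra hh
    obtain ⟨r, hr⟩ := mem_range_of_exists_le_of_exists_ge hθc ⟨t1, not_lt.1 hh⟩
      ⟨t2, (hs.2.trans ht2.1).le⟩
    exact nes hE1 r hr
  · rintro ⟨hI, hlt⟩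
    have hE1 := hlt.trans_le (min_le_left _ _)
    have hE2 := hlt.trans_le (min_le_right _ _)
    exact forward α d β hα hβ hd θs θss hs.1 hs.2 hss.1 hss.2 hUL.2 hUR.1 heq θ W h
      (trap θ hθc θs θss 0 (nes hE1) (ness hE2) hI) hE1 hE2
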